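/- Peirce's law ((p → q) → p) → p, for distinct atoms p and q, is not N-valid. -/

import Mathlib

/-! ## Dialogical logic: formulas, statements, moves -/

/-- Propositional formulas, built from atoms (indexed by `ℕ`) and `¬`, `∧`, `∨`, `→`. -/
inductive Formula : Type
  | atom : ℕ → Formula
  | neg : Formula → Formula
  | conj : Formula → Formula → Formula
  | disj : Formula → Formula → Formula
  | impl : Formula → Formula → Formula
  deriving DecidableEq, Inhabited

/-- Statements: formulas together with the three symbolic attacks `∧_L`, `∧_R` and `?`. -/
inductive Statement : Type
  | form : Formula → Statement
  | conjL : Statement  -- the symbolic attack ∧_L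
  | conjR : Statement  -- the symbolic attack ∧_R
  | question : Statement   -- the symbolic attack ?
  deriving DecidableEq, Inhabited

/-- A formula is atomic iff it is an atom. -/
def Formula.isAtomic : Formula → Prop
  | .atom _ => True
  | _ => False

/-- A move of a dialogue: a statement together with a reference.  The reference is
`none` for the initial move, `some (m, true)` for an attack on the assertion made at
move `m`, and `some (m, false)` for a defense against the attack made at move `m`. -/
structure Move : Type where
  stmt : Statement
  ref : Option (ℕ × Bool)
  deriving DecidableEq, Inhabited

/-! ## Particle rules -/

/-- Particle rules, attacks: `Attacks a φ` holds when the statement `a` is an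
admissible attack against the assertion `φ`. -/
inductive Attacks : Statement → Formula → Prop
  | conjL (φ ψ : Formula) : Attacks .conjL (.conj φ ψ)
  | conjR (φ ψ : Formula) : Attacks .conjR (.conj φ ψ)
  | disj (φ ψ : Formula) : Attacks .question (.disj φ ψ)
  | impl (φ ψ : Formula) : Attacks (.form φ) (.impl φ ψ)
  | neg (φ : Formula) : Attacks (.form φ) (.neg φ)

/-- Particle rules, defenses: `Defends s a φ` holds when the statement `s` is an
admissible defense of the assertion `φ` against the attack `a`.  (A negation admits
no defense.) -/
inductive Defends : Statement → Statement → Formula → Prop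
  | conjL (φ ψ : Formula) : Defends (.form φ) .conjL (.conj φ ψ)
  | conjR (φ ψ : Formula) : Defends (.form ψ) .conjR (.conj φ ψ)
  | disjL (φ ψ : Formula) : Defends (.form φ) .question (.disj φ ψ)
  | disjR (φ ψ : Formula) : Defends (.form ψ) .question (.disj φ ψ)
  | impl (φ ψ : Formula) : Defends (.form ψ) (.form φ) (.impl φ ψ)

/-! ## Dialogues

A (finite stage of a) dialogue is modelled as a list of moves; the move at index `i`
is the `i`-th move, made by Proponent P if `i` is even and by Opponent O if `i` is odd. -/

/-- The skeletal dialogue conditions: move 0 is an assertion of a formula with no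
reference, and every later move is an attack on, or a defense against, a specified
earlier move of the other player, in accordance with the particle rules; only
non-atomic assertions may be attacked. -/
def IsDialogue (d : List Move) : Prop :=
  (∀ _ : 0 < d.length, d[0]!.ref = none ∧ ∃ φ : Formula, d[0]!.stmt = .form φ) ∧
  (∀ i : ℕ, 0 < i → i < d.length →
    ∃ (m : ℕ) (z : Bool), d[i]!.ref = some (m, z) ∧ m < i ∧ m % 2 ≠ i % 2 ∧
      (z = true →
        ∃ φ : Formula, d[m]!.stmt = .form φ ∧ ¬ φ.isAtomic ∧ Attacks d[i]!.stmt φ) ∧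
      (z = false →
        ∃ (k : ℕ) (φ : Formula), d[m]!.ref = some (k, true) ∧ k < m ∧
          d[k]!.stmt = .form φ ∧ Defends d[i]!.stmt d[m]!.stmt φ))

/-- Rule D10: P may assert an atomic formula only if O has asserted it earlier. -/
def RuleD10 (d : List Move) : Prop :=
  ∀ i < d.length, i % 2 = 0 → ∀ a : ℕ, d[i]!.stmt = .form (.atom a) →
    ∃ j < i, j % 2 = 1 ∧ d[j]!.stmt = .form (.atom a)

/-- Rule D13: each P-assertion may be attacked at most once. -/
def RuleD13 (d : List Move) : Prop :=
  ∀ m : ℕ, m % 2 = 0 → ∀ i < d.length, ∀ j < d.length,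
    d[i]!.ref = some (m, true) → d[j]!.ref = some (m, true) → i = j

/-- Rule E: O may only react (attack or defend) against the immediately preceding
P-move. -/
def RuleE (d : List Move) : Prop :=
  ∀ i < d.length, i % 2 = 1 → ∃ z : Bool, d[i]!.ref = some (i - 1, z)

/-- The rule set N = {D10, D13}. -/
def NRules (d : List Move) : Prop := RuleD10 d ∧ RuleD13 d

/-- The rule set CL = {D10, D13, E}. -/
def CLRules (d : List Move) : Prop := RuleD10 d ∧ RuleD13 d ∧ RuleE d

/-- A dialogue commences with `φ` when its initial move is P's assertion of `φ`. -/
def CommencesWith (φ : Formula) (d : List Move) : Prop :=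
  0 < d.length ∧ d[0]!.stmt = .form φ

/-- An `S`-dialogue for `φ` (for a rule set `S`): a dialogue commencing with `φ`
that obeys the structural rules `S`.  These are exactly the branches (identified
with their underlying move sequences) of the `S`-dialogue tree for `φ`. -/
def SDialogueFor (S : List Move → Prop) (φ : Formula) (d : List Move) : Prop :=
  IsDialogue d ∧ S d ∧ CommencesWith φ d

/-- P wins a finite `S`-dialogue for `φ`: it ends with a P-move (the last index,
`d.length - 1`, is even, i.e. `d.length` is odd) and it cannot be extended by any
legal further (O-)move. -/
def WinsFor (S : List Move → Prop) (φ : Formula) (d : List Move) : Prop :=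
  SDialogueFor S φ d ∧ d.length % 2 = 1 ∧ ∀ m : Move, ¬ SDialogueFor S φ (d ++ [m])

/-- An `S`-winning strategy for P for `φ`, modelled as a set `T` of `S`-dialogues for
`φ`: the nodes of a rooted subtree of the `S`-dialogue tree for `φ`, each node being
identified with the dialogue leading from the root to it.  The conditions state that
`T` is a nonempty, prefix-closed set of `S`-dialogues for `φ` (hence a rooted subtree
of the `S`-dialogue tree with the same root), that every branch of `T` is a finite
`S`-dialogue won by P (leaves are wins for P, and there is no infinite branch), that
every node at odd depth (an O-move) has exactly one child, and that every node at
even depth (a P-move) has the same children in `T` as in the full dialogue tree. -/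
structure IsWinningStrategy (S : List Move → Prop) (φ : Formula) (T : Set (List Move)) : Prop where
  nonempty : T.Nonempty
  dialogues : ∀ d ∈ T, SDialogueFor S φ d
  prefix_closed : ∀ d ∈ T, ∀ e : List Move, e <+: d → 0 < e.length → e ∈ T
  leaf_wins : ∀ d ∈ T, (∀ m : Move, d ++ [m] ∉ T) → WinsFor S φ d
  no_infinite_branch : ∀ f : ℕ → Move, ∃ n : ℕ, 0 < n ∧ (List.ofFn fun i : Fin n => f i) ∉ T
  odd_unique_child : ∀ d ∈ T, 0 < d.length → d.length % 2 = 0 → ∃! m : Move, d ++ [m] ∈ T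
  even_all_children : ∀ d ∈ T, d.length % 2 = 1 →
    ∀ m : Move, SDialogueFor S φ (d ++ [m]) → d ++ [m] ∈ T

/-- `φ` is `S`-valid iff P has an `S`-winning strategy for `φ`. -/
def SValid (S : List Move → Prop) (φ : Formula) : Prop :=
  ∃ T : Set (List Move), IsWinningStrategy S φ T

/-- `φ` is N-valid (`⊨_N φ`) iff P has an N-winning strategy for `φ`. -/
def NValid (φ : Formula) : Prop := SValid NRules φ

theorem getElem!_append_lt (d : List Move) (m : Move) (i : ℕ) (h : i < d.length) :
    (d ++ [m])[i]! = d[i]! := by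
  simp [List.getElem!_eq_getElem?_getD, List.getElem?_append_left h]

theorem getElem!_append_self (d : List Move) (m : Move) :
    (d ++ [m])[d.length]! = m := by
  simp [List.getElem!_eq_getElem?_getD]

theorem attacks_impl_inv {s : Statement} {χ ψ : Formula} (h : Attacks s (.impl χ ψ)) :
    s = .form χ := by
  cases h
  rfl

theorem defends_impl_inv {s a : Statement} {χ ψ : Formula} (h : Defends s a (.impl χ ψ)) :
    s = .form ψ := by
  cases h
  rfl

/-- O may always repeat the defense against a P-attack made at move `2` on move `1`. -/
theorem extend_defense (φ χ ψ : Formula) (d : List Move) (hd : SDialogueFor NRules φ d)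
    (hodd : d.length % 2 = 1) (h3 : 3 ≤ d.length)
    (h1 : d[1]!.stmt = .form (.impl χ ψ)) (h2 : d[2]!.ref = some (1, true))
    (h2s : d[2]!.stmt = .form χ) :
    SDialogueFor NRules φ (d ++ [⟨.form ψ, some (2, false)⟩]) := by
  obtain ⟨⟨hz, hs⟩, ⟨h10, h13⟩, hc0, hc⟩ := hd
  set x : Move := ⟨.form ψ, some (2, false)⟩ with hx
  have A : ∀ i, i < d.length → (d ++ [x])[i]! = d[i]! := getElem!_append_lt d x
  have B : (d ++ [x])[d.length]! = x := getElem!_append_self d x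
  have L : (d ++ [x]).length = d.length + 1 := by simp
  refine ⟨⟨?_, ?_⟩, ⟨?_, ?_⟩, ?_, ?_⟩
  · intro _
    rw [A 0 hc0]
    exact hz hc0
  · intro i hi hil
    rcases Nat.lt_or_ge i d.length with h | h
    · obtain ⟨m, z, hr, hm, hp, ha, hdf⟩ := hs i hi h
      refine ⟨m, z, ?_, hm, hp, ?_, ?_⟩
      · rw [A i h, hr]
      · rw [A i h, A m (by omega)]
        exact ha
      · intro hzf
        obtain ⟨k, θ, q1, q2, q3, q4⟩ := hdf hzf
        refine ⟨k, θ, ?_, q2, ?_, ?_⟩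
        · rw [A m (by omega), q1]
        · rw [A k (by omega), q3]
        · rw [A i h, A m (by omega)]
          exact q4
    · have : i = d.length := by omega
      subst this
      refine ⟨2, false, ?_, by omega, by omega, by simp, ?_⟩
      · rw [B]
      · intro _
        refine ⟨1, .impl χ ψ, ?_, by omega, ?_, ?_⟩
        · rw [A 2 (by omega), h2]
        · rw [A 1 (by omega), h1]
        · rw [B, A 2 (by omega), h2s]
          exact Defends.impl χ ψ
  · intro i hi hpar a hst
    have h : i < d.length := by
      by_contra hcon
      have : i = d.length := by omega
      omega
    rw [A i h] at hst
    obtain ⟨j, hj, hj1, hj2⟩ := h10 i h hpar a hst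
    exact ⟨j, hj, hj1, by rw [A j (by omega), hj2]⟩
  · intro m hm i hi j hj hri hrj
    have key : ∀ i, i < (d ++ [x]).length → (d ++ [x])[i]!.ref = some (m, true) →
        i < d.length := by
      intro i hi hr
      by_contra hcon
      have : i = d.length := by omega
      subst this
      rw [B] at hr
      simp [hx] at hr
    have hi' := key i hi hri
    have hj' := key j hj hrj
    rw [A i hi'] at hri
    rw [A j hj'] at hrj
    exact h13 m hm i hi' j hj' hri hrj
  · omega
  · rw [A 0 hc0, hc]

/-- A set of nonempty lists closed under nonempty prefixes in which every list with a given
prefix property can be extended has an infinite branch. -/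
theorem infinite_branch (T : Set (List Move)) (Q : List Move → Prop)
    (hpre : ∀ d ∈ T, ∀ e : List Move, e <+: d → 0 < e.length → e ∈ T)
    (hQT : ∀ d, Q d → d ∈ T) (b : List Move) (hb : Q b) (hb0 : 0 < b.length)
    (hstep : ∀ d, Q d → ∃ m, Q (d ++ [m])) :
    ∃ f : ℕ → Move, ∀ n : ℕ, 0 < n → (List.ofFn fun i : Fin n => f i) ∈ T := by
  have hstep' : ∀ d : {d // Q d}, ∃ m, Q (d.1 ++ [m]) := fun d => hstep d.1 d.2
  choose nx hnx using hstep'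
  let e : ℕ → {d // Q d} := fun n => Nat.rec ⟨b, hb⟩ (fun _ d => ⟨d.1 ++ [nx d], hnx d⟩) n
  have he : ∀ n, (e (n + 1)).1 = (e n).1 ++ [nx (e n)] := fun n => rfl
  have hlen : ∀ n, (e n).1.length = b.length + n := by
    intro n
    induction n with
    | zero => rfl
    | succ k ih => rw [he, List.length_append, ih]; simp; omega
  have hstab : ∀ i k, i < (e k).1.length → ∀ n, k ≤ n → (e n).1[i]! = (e k).1[i]! := by
    intro i k hi n hn
    induction n, hn using Nat.le_induction with
    | base => rfl
    | succ n hn ih =>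
      rw [he, getElem!_append_lt _ _ _ (by rw [hlen] at hi ⊢; omega), ih]
  refine ⟨fun i => (e i).1[i]!, fun n hn => ?_⟩
  have : (List.ofFn fun i : Fin n => (e i.1).1[i.1]!) = (e n).1.take n := by
    apply List.ext_getElem
    · simp [hlen]
    · intro i h1 h2
      have hin : i < n := by simpa using h1
      have hl : i < (e n).1.length := by rw [hlen]; omega
      have h := hstab i i (by rw [hlen]; omega) n (by omega)
      simp only [List.getElem_ofFn, List.getElem_take]
      rw [← h, getElem!_pos (e n).1 i hl]
  rw [this]
  refine hpre _ (hQT _ (e n).2) _ (List.take_prefix _ _) ?_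
  rw [List.length_take, hlen]
  omega

/-- Peirce's law `((p → q) → p) → p`, for distinct atoms `p` and
`q`, is not N-valid. -/
theorem peirce_not_N_valid (p q : ℕ) (hpq : p ≠ q) :
    ¬ NValid (Formula.impl
        (Formula.impl (Formula.impl (Formula.atom p) (Formula.atom q)) (Formula.atom p))
        (Formula.atom p)) := by
  rintro ⟨T, hT⟩
  set χ : Formula := Formula.impl (Formula.atom p) (Formula.atom q) with hχ
  set α : Formula := Formula.impl χ (Formula.atom p) with hα
  set φ : Formula := Formula.impl α (Formula.atom p) with hφ
  -- the root
  have hroot : [(⟨.form φ, none⟩ : Move)] ∈ T := by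
    obtain ⟨d, hd⟩ := hT.nonempty
    obtain ⟨⟨hz, -⟩, -, hc0, hc⟩ := hT.dialogues d hd
    match d, hd, hz, hc0, hc with
    | ⟨s, r⟩ :: t, hd, hz, _, hc =>
      have h1 := (hz (by simp)).1
      simp at h1 hc
      subst h1 hc
      exact hT.prefix_closed _ hd _ (by simp) (by simp)
  -- the only opponent move
  have hone : [(⟨.form φ, none⟩ : Move), ⟨.form α, some (0, true)⟩] ∈ T := by
    refine hT.even_all_children _ hroot (by simp) _ ?_
    refine ⟨⟨?_, ?_⟩, ⟨?_, ?_⟩, ?_, ?_⟩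
    · intro _
      exact ⟨rfl, φ, rfl⟩
    · intro i hi hil
      have : i = 1 := by simp at hil; omega
      subst this
      refine ⟨0, true, rfl, by omega, by omega, ?_, by simp⟩
      intro _
      exact ⟨φ, rfl, by simp [hφ, Formula.isAtomic], Attacks.impl _ _⟩
    · intro i hi hpar a hst
      have : i = 0 := by simp at hi; omega
      subst this
      simp [hφ] at hst
    · intro m hm i hi j hj hri hrj
      simp at hi hj
      have hi2 : i = 0 ∨ i = 1 := by omega
      have hj2 : j = 0 ∨ j = 1 := by omega
      rcases hi2 with rfl | rfl <;> rcases hj2 with rfl | rfl <;>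
        first | rfl | (simp at hri; done) | (simp at hrj; done)
    · simp
    · rfl
  obtain ⟨x, hx, -⟩ := hT.odd_unique_child _ hone (by simp) (by simp)
  simp only [List.cons_append, List.nil_append] at hx
  have hx2 : x.ref = some (1, true) ∧ x.stmt = .form χ := by
    obtain ⟨⟨-, hs⟩, ⟨h10, -⟩, -⟩ := hT.dialogues _ hx
    obtain ⟨m, z, hr, hm, hp, ha, hdf⟩ := hs 2 (by omega) (by simp)
    have : m = 1 := by omega
    subst this
    cases z with
    | true =>
      obtain ⟨θ, q1, -, q3⟩ := ha rfl
      simp at hr q1 q3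
      subst q1
      refine ⟨hr, ?_⟩
      exact attacks_impl_inv q3
    | false =>
      exfalso
      obtain ⟨k, θ, q1, -, q3, q4⟩ := hdf rfl
      simp at q1
      subst q1
      simp at q3 q4
      subst q3
      have hxs : x.stmt = .form (.atom p) := defends_impl_inv q4
      obtain ⟨j, hj, hj1, hj2⟩ := h10 2 (by simp) (by simp) p (by simpa using hxs)
      have : j = 1 := by omega
      subst this
      simp [hα] at hj2
  obtain ⟨hxr, hxs⟩ := hx2
  let Q : List Move → Prop := fun d => d ∈ T ∧ 3 ≤ d.length ∧
    d[1]!.stmt = .form α ∧ d[2]!.ref = some (1, true) ∧ d[2]!.stmt = .form χ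
  obtain ⟨f, hf⟩ := infinite_branch T Q hT.prefix_closed (fun d h => h.1) _
    ⟨hx, by simp, rfl, by simpa using hxr, by simpa using hxs⟩ (by simp) (by
      rintro d ⟨hd, h3, h1, h2, h2s⟩
      suffices h : ∃ m, d ++ [m] ∈ T by
        obtain ⟨m, hm⟩ := h
        refine ⟨m, hm, by simp; omega, ?_, ?_, ?_⟩
        · rw [getElem!_append_lt _ _ _ (by omega), h1]
        · rw [getElem!_append_lt _ _ _ (by omega), h2]
        · rw [getElem!_append_lt _ _ _ (by omega), h2s]
      rcases Nat.mod_two_eq_zero_or_one d.length with h | h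
      · obtain ⟨m, hm, -⟩ := hT.odd_unique_child d hd (by omega) h
        exact ⟨m, hm⟩
      · exact ⟨_, hT.even_all_children d hd h _
          (extend_defense φ χ (.atom p) d (hT.dialogues d hd) h h3 h1 h2 h2s)⟩)
  obtain ⟨n, hn, hnT⟩ := hT.no_infinite_branch f
  exact hnT (hf n hn)
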